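/- Let G ∈ G_{n,n+2} with n ≥ 1. If G is an imbalanced weak subdivision of K₄, then there exists another weak K₄-subdivision H ∈ G_{n,n+2} such that d_2(H) < d_2(G) and d_3(H) < d_3(G). Hence an imbalanced weak K₄-subdivision is not p-optimal for any p ∈ (0,1). -/

import Mathlib

open Classical Finset

noncomputable section

/-- A finite multigraph: edges carry two (possibly equal) endpoints. -/
structure Multigraph where
  V : Type
  E : Type
  [fintV : Fintype V]
  [fintE : Fintype E]
  src : E → V
  tgt : E → V

attribute [instance] Multigraph.fintV Multigraph.fintE

namespace Multigraph

variable (G : Multigraph)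

/-- Number of vertices. -/
def nV : ℕ := Fintype.card G.V

/-- Number of edges (with multiplicity). -/
def nE : ℕ := Fintype.card G.E

/-- One step along an edge belonging to the edge set `S`. -/
def stepOn (S : Finset G.E) (u v : G.V) : Prop :=
  ∃ e ∈ S, (G.src e = u ∧ G.tgt e = v) ∨ (G.src e = v ∧ G.tgt e = u)

/-- The spanning subgraph with edge set `S` is connected. -/
def ConnOn (S : Finset G.E) : Prop :=
  ∀ u v : G.V, Relation.ReflTransGen (G.stepOn S) u v

/-- `G` is connected. -/
def Connected : Prop := G.ConnOn Finset.univ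

/-- The edge set `F` disconnects `G` (i.e. is a disconnection). -/
def Disconnects (F : Finset G.E) : Prop := ¬ G.ConnOn (Finset.univ \ F)

/-- `d i G`: the number of `i`-disconnections of `G`. -/
def d (i : ℕ) : ℕ :=
  ((Finset.univ : Finset (Finset G.E)).filter fun F => F.card = i ∧ G.Disconnects F).card

/-- The all-terminal reliability `R(G,p)`: each edge is independently retained with
probability `p`; this is the probability that the retained spanning subgraph is connected. -/
def rel (p : ℝ) : ℝ :=
  ∑ S : Finset G.E, if G.ConnOn S then p ^ S.card * (1 - p) ^ (G.nE - S.card) else 0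

/-- `e` is a bridge. -/
def IsBridge (e : G.E) : Prop := G.Disconnects {e}

def Bridgeless : Prop := ∀ e : G.E, ¬ G.IsBridge e

/-- The number of spanning trees of `G` (connected spanning subgraphs with `nV - 1` edges). -/
def treeCount : ℕ :=
  ((Finset.univ : Finset (Finset G.E)).filter fun S => S.card + 1 = G.nV ∧ G.ConnOn S).card

/-- The edge-connectivity: the least size of a disconnecting set of edges. -/
def edgeConnectivity : ℕ :=
  sInf {i : ℕ | ∃ F : Finset G.E, F.card = i ∧ G.Disconnects F}

/-- Degree of a vertex (a loop counts twice). -/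
def deg (v : G.V) : ℕ :=
  (Finset.univ.filter fun e => G.src e = v).card +
    (Finset.univ.filter fun e => G.tgt e = v).card

/-- The edges crossing the vertex set `A`. -/
def cutEdges (A : Finset G.V) : Finset G.E :=
  Finset.univ.filter fun e =>
    (G.src e ∈ A ∧ G.tgt e ∉ A) ∨ (G.src e ∉ A ∧ G.tgt e ∈ A)

/-- `F` is a cut: the set of edges crossing a nontrivial bipartition of the vertices. -/
def IsCut (F : Finset G.E) : Prop :=
  ∃ A : Finset G.V, A.Nonempty ∧ A ≠ Finset.univ ∧ F = G.cutEdges A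

/-- `F` is a bond: a minimal cut. -/
def IsBond (F : Finset G.E) : Prop :=
  G.IsCut F ∧ ∀ F' ⊆ F, G.IsCut F' → F' = F

/-- Number of `s`-bonds of `G`. -/
def bondCount (s : ℕ) : ℕ :=
  ((Finset.univ : Finset (Finset G.E)).filter fun F => F.card = s ∧ G.IsBond F).card

/-- Adjacency of vertices. -/
def Adj (u v : G.V) : Prop :=
  ∃ e : G.E, (G.src e = u ∧ G.tgt e = v) ∨ (G.src e = v ∧ G.tgt e = u)

/-- `G` is simple: no loops and no parallel edges. -/
def IsSimple : Prop :=
  (∀ e : G.E, G.src e ≠ G.tgt e) ∧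
    ∀ e f : G.E,
      ((G.src e = G.src f ∧ G.tgt e = G.tgt f) ∨ (G.src e = G.tgt f ∧ G.tgt e = G.src f)) →
        e = f

end Multigraph

/-- `G ∈ 𝒢_{n,m}`: connected with `n` vertices and `m` edges. -/
def memG (G : Multigraph) (n m : ℕ) : Prop :=
  G.nV = n ∧ G.nE = m ∧ G.Connected

/-- Isomorphism of multigraphs. -/
structure MGIso (G H : Multigraph) where
  vMap : G.V ≃ H.V
  eMap : G.E ≃ H.E
  ends_eq : ∀ e : G.E,
    (H.src (eMap e) = vMap (G.src e) ∧ H.tgt (eMap e) = vMap (G.tgt e)) ∨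
    (H.src (eMap e) = vMap (G.tgt e) ∧ H.tgt (eMap e) = vMap (G.src e))

def IsIso (G H : Multigraph) : Prop := Nonempty (MGIso G H)

/-- `G` is `p`-optimal in `𝒢_{n,m}`. -/
def pOptimal (G : Multigraph) (n m : ℕ) (p : ℝ) : Prop :=
  memG G n m ∧ ∀ H : Multigraph, memG H n m → H.rel p ≤ G.rel p

/-- `G` is uniquely optimal in `𝒢_{n,m}`: strictly more reliable than every
non-isomorphic member, for every `p ∈ (0,1)`. -/
def UniquelyOptimal (G : Multigraph) (n m : ℕ) : Prop :=
  memG G n m ∧ ∀ H : Multigraph, memG H n m → ¬ IsIso G H →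
    ∀ p : ℝ, 0 < p → p < 1 → H.rel p < G.rel p

noncomputable instance quotFintype {α : Type} [Fintype α] {r : α → α → Prop} :
    Fintype (Quot r) :=
  letI := Classical.decEq (Quot r)
  Fintype.ofSurjective (Quot.mk r) fun q => Quot.exists_rep q

/-- Identification of the endpoints of zero-weight edges. -/
def zeroRel (D : Multigraph) (w : D.E → ℕ) : D.V → D.V → Prop :=
  fun u v => ∃ e : D.E, w e = 0 ∧ D.src e = u ∧ D.tgt e = v

/-- The `j`-th node along the chain replacing the edge `e` (whose chain has `w e` edges). -/
def chainNode (D : Multigraph) (w : D.E → ℕ) (e : D.E) (j : ℕ) :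
    Quot (zeroRel D w) ⊕ (Σ f : D.E, Fin (w f - 1)) :=
  if h : 0 < j ∧ j < w e then Sum.inr ⟨e, ⟨j - 1, by omega⟩⟩
  else if j = 0 then Sum.inl (Quot.mk _ (D.src e))
  else Sum.inl (Quot.mk _ (D.tgt e))

/-- The weak subdivision of `D` determined by the chain lengths `w`: each edge `e` is
replaced by a chain with `w e` edges; zero-weight edges are contracted. -/
def subdivide (D : Multigraph) (w : D.E → ℕ) : Multigraph where
  V := Quot (zeroRel D w) ⊕ (Σ f : D.E, Fin (w f - 1))
  E := Σ f : D.E, Fin (w f)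
  src f := chainNode D w f.1 f.2.val
  tgt f := chainNode D w f.1 (f.2.val + 1)

/-- The zero-weight edges contain no cycle (no "zero cycle"): they form a forest. -/
def ZeroAcyclic (D : Multigraph) (w : D.E → ℕ) : Prop :=
  Fintype.card (Quot (zeroRel D w)) +
      (Finset.univ.filter fun e : D.E => w e = 0).card = Fintype.card D.V

/-- `G` is a weak subdivision of `D` with chain lengths `w`. -/
def IsWeakSubdivision (G D : Multigraph) (w : D.E → ℕ) : Prop :=
  ZeroAcyclic D w ∧ IsIso G (subdivide D w)

/-- `D` is a weak distillation of `G`. -/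
def IsWeakDistillation (D G : Multigraph) : Prop :=
  ∃ w : D.E → ℕ, IsWeakSubdivision G D w

/-- The chain lengths differ pairwise by at most one. -/
def BalancedWeights {E : Type} (w : E → ℕ) : Prop := ∀ e f : E, w e ≤ w f + 1

/-- `D ∈ 𝒟_k`: connected, cubic, 3-edge-connected, of exceedance `k`. -/
def memDk (k : ℕ) (D : Multigraph) : Prop :=
  D.Connected ∧ (∀ v : D.V, D.deg v = 3) ∧
    (∀ F : Finset D.E, D.Disconnects F → 3 ≤ F.card) ∧ D.nE = D.nV + k

/-- Identification of the two endpoints of the edge `e`. -/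
def contractRel (G : Multigraph) (e : G.E) : G.V → G.V → Prop :=
  fun u v => u = G.src e ∧ v = G.tgt e

/-- Contraction of the edge `e`. -/
def Multigraph.contract (G : Multigraph) (e : G.E) : Multigraph :=
  letI := Classical.decEq G.E
  { V := Quot (contractRel G e)
    E := {f : G.E // f ≠ e}
    src := fun f => Quot.mk _ (G.src f.1)
    tgt := fun f => Quot.mk _ (G.tgt f.1) }

/-- `G'` is obtained from `G` by shifting an edge: in an intermediate graph `H`
(the expansion of `G` at a vertex by the new edge `e'`), the edges `e, e'` form a
2-bond; contracting `e'` gives back `G`, while contracting `e` gives `G'`. -/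
def IsShiftOf (G G' : Multigraph) : Prop :=
  ∃ (H : Multigraph) (e e' : H.E), e ≠ e' ∧
    H.src e ≠ H.tgt e ∧ H.src e' ≠ H.tgt e' ∧
    H.IsBond {e, e'} ∧
    IsIso (H.contract e') G ∧ IsIso (H.contract e) G'

/-- Equivalence of graphs: repeated edge shifting. -/
def EquivalentGraphs (G G' : Multigraph) : Prop :=
  Relation.ReflTransGen IsShiftOf G G'

/-- `G'` is obtained from `G` by moving the (non-loop) edge `e`: contracting `e` and
expanding a new edge, identified with `e` via `φ`, at an arbitrary vertex.
Equivalently, `G/e` and `G'/φ e` agree, compatibly with the edge identification `φ`. -/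
def MovedEdge (G G' : Multigraph) (φ : G.E ≃ G'.E) (e : G.E) : Prop :=
  G.src e ≠ G.tgt e ∧ G'.src (φ e) ≠ G'.tgt (φ e) ∧
  ∃ ψ : Quot (contractRel G e) ≃ Quot (contractRel G' (φ e)),
    ∀ f : G.E, f ≠ e →
      ((ψ (Quot.mk _ (G.src f)) = Quot.mk _ (G'.src (φ f)) ∧
        ψ (Quot.mk _ (G.tgt f)) = Quot.mk _ (G'.tgt (φ f))) ∨
       (ψ (Quot.mk _ (G.src f)) = Quot.mk _ (G'.tgt (φ f)) ∧
        ψ (Quot.mk _ (G.tgt f)) = Quot.mk _ (G'.src (φ f))))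

/-- Move one edge from the chain `a` to the chain `b`. -/
def moveWeight {E : Type} (w : E → ℕ) (a b : E) : E → ℕ :=
  fun g => if g = b then w b + 1 else if g = a then w a - 1 else w g

/-- The chains of maximal length. -/
def maxChains (D : Multigraph) (w : D.E → ℕ) : Finset D.E :=
  Finset.univ.filter fun e => ∀ f : D.E, w f ≤ w e

/-- The chains of minimal length. -/
def minChains (D : Multigraph) (w : D.E → ℕ) : Finset D.E :=
  Finset.univ.filter fun e => ∀ f : D.E, w e ≤ w f

/-- Degree of `v` within the edge set `S`. -/
def degIn (D : Multigraph) (S : Finset D.E) (v : D.V) : ℕ :=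
  (S.filter fun e => D.src e = v).card + (S.filter fun e => D.tgt e = v).card

/-- `S` is a matching (pairwise non-adjacent edges). -/
def IsMatchingIn (D : Multigraph) (S : Finset D.E) : Prop := ∀ v : D.V, degIn D S v ≤ 1

/-- `S` is a path with three edges. -/
def IsPath3In (D : Multigraph) (S : Finset D.E) : Prop :=
  S.card = 3 ∧ (∀ v : D.V, degIn D S v ≤ 2) ∧
    (Finset.univ.filter fun v : D.V => degIn D S v = 1).card = 2

/-- `S` is the disjoint union of a path with three edges and a single edge. -/
def IsPath3PlusEdgeIn (D : Multigraph) (S : Finset D.E) : Prop :=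
  S.card = 4 ∧ (∀ v : D.V, degIn D S v ≤ 2) ∧
    (Finset.univ.filter fun v : D.V => degIn D S v = 1).card = 4 ∧
    ∃ e ∈ S, degIn D S (D.src e) = 2 ∧ degIn D S (D.tgt e) = 2

/-- `S` is the disjoint union of two paths with two edges each. -/
def IsTwoPlusTwoIn (D : Multigraph) (S : Finset D.E) : Prop :=
  S.card = 4 ∧ (∀ v : D.V, degIn D S v ≤ 2) ∧
    (Finset.univ.filter fun v : D.V => degIn D S v = 1).card = 4 ∧
    ∀ e ∈ S, degIn D S (D.src e) = 1 ∨ degIn D S (D.tgt e) = 1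

/-- Two edges sharing a vertex. -/
def AdjEdges (D : Multigraph) (a b : D.E) : Prop :=
  ∃ v : D.V, (D.src a = v ∨ D.tgt a = v) ∧ (D.src b = v ∨ D.tgt b = v)

/-- The number of incidences of edges of weight `c` at the vertex `u`. -/
def incCount (D : Multigraph) (w : D.E → ℕ) (u : D.V) (c : ℕ) : ℕ :=
  (Finset.univ.filter fun e : D.E => D.src e = u ∧ w e = c).card +
    (Finset.univ.filter fun e : D.E => D.tgt e = u ∧ w e = c).card

/-- The `π^v`-value of the vertex `u`: the number of incident edges of weight `q + 1`
minus the number of incident edges of weight `q - 1`. -/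
def piV (D : Multigraph) (w : D.E → ℕ) (q : ℕ) (u : D.V) : ℤ :=
  (incCount D w u (q + 1) : ℤ) -
    (if q = 0 then 0 else (incCount D w u (q - 1) : ℤ))

/-- The `π^v`-values are balanced: pairwise differences at most one. -/
def BalancedPiV (D : Multigraph) (w : D.E → ℕ) (q : ℕ) : Prop :=
  ∀ u v : D.V, piV D w q u ≤ piV D w q v + 1

/-- The standard weight `q`, where `m = 3kq + r` with `-3k/2 < r ≤ 3k/2`. -/
def stdWeight (m k : ℕ) : ℕ := (2 * m + 3 * k - 1) / (6 * k)

/-- `w` is a balanced weighting of `D` of total size `m` (the implied weak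
subdivision is the generic member of `ℬ_m(D)`). -/
def IsBalancedWeighting (D : Multigraph) (w : D.E → ℕ) (m : ℕ) : Prop :=
  (∑ e : D.E, w e) = m ∧ BalancedWeights w ∧ ZeroAcyclic D w

/-- Every 3-bond of `D` is trivial (consists of the three edges at a single vertex). -/
def OnlyTrivialThreeBonds (D : Multigraph) : Prop :=
  ∀ F : Finset D.E, D.IsBond F → F.card = 3 →
    ∃ u : D.V, F = Finset.univ.filter fun e => D.src e = u ∨ D.tgt e = u

/-- The 3-dipole: two vertices joined by three parallel edges. -/
def dipole3 : Multigraph where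
  V := Fin 2
  E := Fin 3
  src _ := 0
  tgt _ := 1

/-- The complete graph `K₄`. -/
def K4 : Multigraph where
  V := Fin 4
  E := {p : Fin 4 × Fin 4 // p.1 < p.2}
  src p := p.1.1
  tgt p := p.1.2

/-- The complete bipartite graph `K_{3,3}`. -/
def K33 : Multigraph where
  V := Fin 3 ⊕ Fin 3
  E := Fin 3 × Fin 3
  src p := Sum.inl p.1
  tgt p := Sum.inr p.2

/-- The triangular prism `Π₃`; the edges `Sum.inr i` are the rungs. -/
def prism : Multigraph where
  V := Fin 3 × Bool
  E := (Fin 3 × Bool) ⊕ Fin 3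
  src := fun e => match e with
    | Sum.inl (i, b) => (i, b)
    | Sum.inr i => (i, false)
  tgt := fun e => match e with
    | Sum.inl (i, b) => (i + 1, b)
    | Sum.inr i => (i, true)

/-- The Wagner graph (the 4-Möbius ladder): the edges `Sum.inl i` are the rails
(the 8-cycle) and the edges `Sum.inr j` are the rungs. -/
def wagner : Multigraph where
  V := Fin 8
  E := Fin 8 ⊕ Fin 4
  src := fun e => match e with
    | Sum.inl i => i
    | Sum.inr j => ⟨j.val, by omega⟩
  tgt := fun e => match e with
    | Sum.inl i => i + 1
    | Sum.inr j => ⟨j.val + 4, by omega⟩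

/-- The Petersen graph. -/
def petersen : Multigraph where
  V := Fin 5 × Bool
  E := Fin 5 ⊕ Fin 5 ⊕ Fin 5
  src := fun e => match e with
    | Sum.inl i => (i, false)
    | Sum.inr (Sum.inl i) => (i, false)
    | Sum.inr (Sum.inr i) => (i, true)
  tgt := fun e => match e with
    | Sum.inl i => (i + 1, false)
    | Sum.inr (Sum.inl i) => (i, true)
    | Sum.inr (Sum.inr i) => (i + 2, true)


/-!
Call an edge set coindependent if deleting it leaves the graph connected. Since
`#coindependent i-sets + d i = (nE choose i)`, and the reliability is a positive combination of
the numbers of coindependent sets, both claims follow once some weak `K₄`-subdivision with the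
same numbers of vertices and edges has at least as many coindependent sets of every size, and
strictly more of sizes 2 and 3.

A coindependent set of a subdivision picks at most one edge from each chain, and the chains it
meets form a coindependent set of the distillation. So the count for chain lengths `w` is the sum
of `∏ e ∈ F, w e` over coindependent `F`. For `K₄` this is an elementary symmetric polynomial up
to size 2; in size 3 the four vertex stars drop out, and in larger sizes it vanishes.

In an imbalanced `K₄`-subdivision, transfer one edge from a longest chain to a shortest one,
choosing an adjacent shortest chain if there is one and the opposite chain otherwise. This
increases both polynomials, except for one small family treated separately. The resulting
polynomial in size 3 is positive, which forces the zero-length chains to be acyclic.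
-/

namespace Multigraph

variable {G H D : Multigraph}

theorem ConnOn.color_eq {S : Finset G.E} (hS : G.ConnOn S) {α : Type*} {A : G.V → α}
    (hA : ∀ e ∈ S, A (G.src e) = A (G.tgt e)) (u v : G.V) : A u = A v := by
  induction hS u v with
  | refl => rfl
  | tail _ hstep ih =>
    obtain ⟨e, he, ⟨rfl, rfl⟩ | ⟨rfl, rfl⟩⟩ := hstep
    · exact ih.trans (hA e he)
    · exact ih.trans (hA e he).symm

/-- The relation whose generated equivalence classes are the components of the spanning
subgraph with edge set `S`. -/
def edgeRel (G : Multigraph) (S : Finset G.E) (u v : G.V) : Prop :=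
  ∃ e ∈ S, G.src e = u ∧ G.tgt e = v

/-- The component of `v` in the spanning subgraph with edge set `S`. -/
def comp (S : Finset G.E) (v : G.V) : Quot (G.edgeRel S) := Quot.mk _ v

/-- The number of components of the spanning subgraph with edge set `S`. -/
def numComps (G : Multigraph) (S : Finset G.E) : ℕ := Fintype.card (Quot (G.edgeRel S))

theorem comp_src_eq_comp_tgt {S : Finset G.E} {e : G.E} (he : e ∈ S) :
    comp S (G.src e) = comp S (G.tgt e) :=
  Quot.sound ⟨e, he, rfl, rfl⟩

theorem connOn_iff_forall_comp_eq {S : Finset G.E} :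
    G.ConnOn S ↔ ∀ u v, comp S u = comp S v := by
  refine ⟨fun hS ↦ hS.color_eq fun _ ↦ comp_src_eq_comp_tgt, fun h u v ↦ ?_⟩
  have reach_congr (x y : G.V) (hxy : G.edgeRel S x y) :
      Relation.ReflTransGen (G.stepOn S) u x = Relation.ReflTransGen (G.stepOn S) u y := by
    obtain ⟨e, he, rfl, rfl⟩ := hxy
    exact propext ⟨fun hu ↦ hu.tail ⟨e, he, .inl ⟨rfl, rfl⟩⟩,
      fun hu ↦ hu.tail ⟨e, he, .inr ⟨rfl, rfl⟩⟩⟩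
  exact (congrArg (Quot.lift _ reach_congr) (h u v)).mp .refl

theorem connOn_iff_numComps_le_one {S : Finset G.E} : G.ConnOn S ↔ G.numComps S ≤ 1 := by
  rw [connOn_iff_forall_comp_eq, numComps, Fintype.card_le_one_iff]
  exact ⟨fun h ↦ Quot.ind fun u ↦ Quot.ind fun v ↦ h u v, fun h u v ↦ h _ _⟩

theorem disconnects_iff_exists_color {F : Finset G.E} :
    G.Disconnects F ↔
      ∃ A : G.V → Bool, (∃ u v, A u ≠ A v) ∧ ∀ e, A (G.src e) ≠ A (G.tgt e) → e ∈ F := by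
  constructor
  · intro hF
    obtain ⟨u, v, huv⟩ : ∃ u v, comp (univ \ F) u ≠ comp (univ \ F) v := by
      simpa [Disconnects, connOn_iff_forall_comp_eq] using hF
    refine ⟨fun x ↦ decide (comp (univ \ F) x = comp (univ \ F) v), ⟨u, v, by simp [huv]⟩,
      fun e he ↦ ?_⟩
    by_contra heF
    exact he (by simp only [comp_src_eq_comp_tgt (mem_sdiff.2 ⟨mem_univ e, heF⟩)])
  · rintro ⟨A, ⟨u, v, huv⟩, hA⟩ hF
    refine huv (hF.color_eq (fun e he ↦ ?_) u v)
    by_contra hne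
    exact (mem_sdiff.1 he).2 (hA e hne)

theorem numComps_empty : G.numComps ∅ = G.nV := by
  have hinj : Function.Injective (comp (∅ : Finset G.E)) := fun u v huv ↦
    congrArg (Quot.lift id fun x y ⟨e, he, _⟩ ↦ absurd he (notMem_empty e)) huv
  exact (Fintype.card_of_bijective ⟨hinj, Quot.mk_surjective⟩).symm

theorem numComps_le_numComps_insert_add_one (e : G.E) (S : Finset G.E) :
    G.numComps S ≤ G.numComps (insert e S) + 1 := by
  -- Merging the component of `tgt e` into that of `src e` factors through `insert e S`, and the
  -- merging map misses only the component of `tgt e`.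
  let merge (v : G.V) : Quot (G.edgeRel S) :=
    if comp S v = comp S (G.tgt e) then comp S (G.src e) else comp S v
  have merge_congr (x y : G.V) (hxy : G.edgeRel (insert e S) x y) : merge x = merge y := by
    obtain ⟨f, hf, rfl, rfl⟩ := hxy
    rcases mem_insert.1 hf with rfl | hf
    · simp only [merge, if_true]
      split_ifs <;> rfl
    · simp only [merge, comp_src_eq_comp_tgt hf]
  have hsurj : Function.Surjective
      (Sum.elim (Quot.lift merge merge_congr) fun _ : Unit ↦ comp S (G.tgt e)) := by
    refine Quot.ind fun v ↦ ?_
    by_cases hv : comp S v = comp S (G.tgt e)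
    · exact ⟨.inr (), hv.symm⟩
    · exact ⟨.inl (comp (insert e S) v), if_neg hv⟩
  simpa [numComps] using Fintype.card_le_of_surjective _ hsurj

theorem numComps_le_numComps_union_add_card (S T : Finset G.E) :
    G.numComps S ≤ G.numComps (T ∪ S) + #T := by
  induction T using Finset.induction_on with
  | empty => simp
  | insert e T he ih =>
    have := numComps_le_numComps_insert_add_one e (T ∪ S)
    rw [insert_union, card_insert_of_notMem he]
    omega

theorem nV_le_numComps_add_card (S : Finset G.E) : G.nV ≤ G.numComps S + #S := by
  simpa [numComps_empty] using numComps_le_numComps_union_add_card ∅ S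

theorem numComps_insert_lt {e : G.E} {S : Finset G.E}
    (he : comp S (G.src e) ≠ comp S (G.tgt e)) : G.numComps (insert e S) < G.numComps S := by
  let coarsen : Quot (G.edgeRel S) → Quot (G.edgeRel (insert e S)) :=
    Quot.map id fun _ _ ⟨f, hf, hends⟩ ↦ ⟨f, mem_insert_of_mem hf, hends⟩
  refine Fintype.card_lt_of_surjective_not_injective coarsen
    (Quot.ind fun v ↦ ⟨comp S v, rfl⟩) fun hinj ↦ he (hinj ?_)
  exact comp_src_eq_comp_tgt (mem_insert_self e S)

theorem Connected.exists_connOn_card_add_one (hG : G.Connected) (hV : 0 < G.nV) :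
    ∃ S : Finset G.E, G.ConnOn S ∧ #S + 1 = G.nV := by
  obtain ⟨S, hS⟩ := (Set.toFinite {S : Finset G.E | G.numComps S + #S = G.nV}).exists_maximal
    ⟨∅, by simp [numComps_empty]⟩
  have hforest : G.numComps S + #S = G.nV := hS.prop
  have ends_eq (e : G.E) : comp S (G.src e) = comp S (G.tgt e) := by
    by_contra hne
    have heS : e ∉ S := fun he ↦ hne (comp_src_eq_comp_tgt he)
    have hins : G.numComps (insert e S) + #(insert e S) = G.nV := by
      have := numComps_insert_lt hne
      have := nV_le_numComps_add_card (insert e S)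
      rw [card_insert_of_notMem heS] at *
      omega
    exact heS (hS.le_of_ge hins (subset_insert e S) (mem_insert_self e S))
  have hconn : G.ConnOn S := connOn_iff_forall_comp_eq.2 (hG.color_eq fun e _ ↦ ends_eq e)
  have hle := connOn_iff_numComps_le_one.1 hconn
  have hpos : 0 < G.numComps S :=
    have := Fintype.card_pos_iff.1 hV
    Fintype.card_pos_iff.2 (this.map (comp S))
  exact ⟨S, hconn, by omega⟩

/-- The `i`-element edge sets whose deletion leaves `G` connected. For connected `G` they are
the coindependent sets of its cycle matroid. -/
def coindepSets (G : Multigraph) (i : ℕ) : Finset (Finset G.E) :=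
  univ.filter fun F ↦ #F = i ∧ ¬ G.Disconnects F

/-- The sum of the monomials `∏ e ∈ F, w e` over the `i`-element coindependent sets `F`. For
chain lengths `w` it counts the coindependent sets of the subdivision. -/
def coindepSum (G : Multigraph) (w : G.E → ℕ) (i : ℕ) : ℕ :=
  ∑ F ∈ G.coindepSets i, ∏ e ∈ F, w e

theorem mem_coindepSets {i : ℕ} {F : Finset G.E} :
    F ∈ G.coindepSets i ↔ #F = i ∧ ¬ G.Disconnects F := by
  simp [coindepSets]

theorem coindepSum_one (i : ℕ) : G.coindepSum (fun _ ↦ 1) i = #(G.coindepSets i) := by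
  simp [coindepSum]

/-- The `i`-element edge sets whose deletion disconnects `G`. -/
def disconnections (G : Multigraph) (i : ℕ) : Finset (Finset G.E) :=
  univ.filter fun F ↦ #F = i ∧ G.Disconnects F

theorem coindepSum_add_sum_disconnections (w : G.E → ℕ) (i : ℕ) :
    G.coindepSum w i + ∑ F ∈ G.disconnections i, ∏ e ∈ F, w e =
      (univ.val.map w).esymm i := by
  have hcoindep :
      G.coindepSets i = {F ∈ powersetCard i (univ : Finset G.E) | ¬ G.Disconnects F} := by
    ext F; simp [coindepSets]
  have hdis : G.disconnections i = {F ∈ powersetCard i (univ : Finset G.E) | G.Disconnects F} := by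
    ext F; simp [disconnections]
  rw [Finset.esymm_map_val, coindepSum, hcoindep, hdis, add_comm, sum_filter_add_sum_filter_not]

theorem card_coindepSets_add_d (i : ℕ) : #(G.coindepSets i) + G.d i = G.nE.choose i := by
  have hsum := G.coindepSum_add_sum_disconnections (fun _ ↦ 1) i
  rw [coindepSum_one, Finset.esymm_map_val] at hsum
  simpa [d, disconnections, nE] using hsum

theorem d_lt_d {i : ℕ} (hE : G.nE = H.nE) (hlt : #(G.coindepSets i) < #(H.coindepSets i)) :
    H.d i < G.d i := by
  have hG := G.card_coindepSets_add_d i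
  have hH := H.card_coindepSets_add_d i
  rw [hE] at hG
  omega

theorem rel_eq_sum_coindepSets (G : Multigraph) (p : ℝ) :
    G.rel p = ∑ i ∈ range (G.nE + 1), #(G.coindepSets i) * (p ^ (G.nE - i) * (1 - p) ^ i) := by
  have hcompl : G.rel p = ∑ F : Finset G.E,
      if ¬ G.Disconnects F then p ^ (G.nE - #F) * (1 - p) ^ #F else 0 := by
    rw [rel, ← compl_bijective.sum_comp]
    refine sum_congr rfl fun F _ ↦ ?_
    have hF : #F ≤ G.nE := card_le_univ F
    have hFc : #(univ \ F) = G.nE - #F := card_univ_sdiff F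
    simp only [compl_eq_univ_sdiff, hFc, Nat.sub_sub_self hF, Disconnects, not_not]
  have hmaps (F : Finset G.E) (_ : F ∈ univ) : #F ∈ range (G.nE + 1) :=
    mem_range_succ_iff.2 (card_le_univ F)
  rw [hcompl, ← sum_fiberwise_of_maps_to hmaps]
  refine sum_congr rfl fun i _ ↦ ?_
  rw [← sum_filter, filter_filter, coindepSets, ← nsmul_eq_mul, ← sum_const]
  exact sum_congr rfl fun F hF ↦ by rw [(mem_filter.1 hF).2.1]

theorem rel_lt_rel {p : ℝ} (hp₀ : 0 < p) (hp₁ : p < 1) (hE : G.nE = H.nE)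
    (hle : ∀ i, #(G.coindepSets i) ≤ #(H.coindepSets i)) {j : ℕ}
    (hlt : #(G.coindepSets j) < #(H.coindepSets j)) : G.rel p < H.rel p := by
  have hweight (i : ℕ) : 0 < p ^ (H.nE - i) * (1 - p) ^ i := by
    have : 0 < 1 - p := sub_pos.2 hp₁
    positivity
  have hj : j ∈ range (H.nE + 1) := by
    obtain ⟨F, hF⟩ := card_pos.1 (Nat.zero_lt_of_lt hlt)
    exact mem_range_succ_iff.2 ((mem_coindepSets.1 hF).1 ▸ card_le_univ F)
  rw [rel_eq_sum_coindepSets, rel_eq_sum_coindepSets, hE]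
  refine sum_lt_sum (fun i _ ↦ ?_) ⟨j, hj, ?_⟩
  · exact mul_le_mul_of_nonneg_right (mod_cast hle i) (hweight i).le
  · exact mul_lt_mul_of_pos_right (mod_cast hlt) (hweight j)

theorem coindepSets_nonempty (hG : G.Connected) (hV : 0 < G.nV) {i : ℕ}
    (hi : G.nV + i ≤ G.nE + 1) : (G.coindepSets i).Nonempty := by
  obtain ⟨S, hS, hcard⟩ := hG.exists_connOn_card_add_one hV
  have hScompl : i ≤ #Sᶜ := by
    have : #Sᶜ = G.nE - #S := card_compl S
    omega
  obtain ⟨F, hFS, hF⟩ := exists_subset_card_eq hScompl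
  refine ⟨F, mem_coindepSets.2 ⟨hF, fun hdis ↦ ?_⟩⟩
  obtain ⟨A, ⟨u, v, huv⟩, hA⟩ := disconnects_iff_exists_color.1 hdis
  refine huv (hS.color_eq (fun e he ↦ ?_) u v)
  by_contra hne
  exact mem_compl.1 (hFS (hA e hne)) he

theorem add_le_nE_add_one_of_mem_coindepSets {i : ℕ} {F : Finset G.E}
    (hF : F ∈ G.coindepSets i) : G.nV + i ≤ G.nE + 1 := by
  obtain ⟨rfl, hconn⟩ := mem_coindepSets.1 hF
  have hcomps := connOn_iff_numComps_le_one.1 (not_not.1 hconn)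
  have hV := nV_le_numComps_add_card (univ \ F)
  have hcompl : #(univ \ F) = G.nE - #F := card_univ_sdiff F
  have hFE : #F ≤ G.nE := card_le_univ F
  omega

theorem coindepSum_eq_zero (w : G.E → ℕ) {i : ℕ} (hi : G.nE + 1 < G.nV + i) :
    G.coindepSum w i = 0 :=
  sum_eq_zero fun _ hF ↦ absurd (add_le_nE_add_one_of_mem_coindepSets hF) (by omega)

theorem zeroAcyclic_of_coindepSum_pos {w : D.E → ℕ} {i : ℕ} (hi : D.nE + 1 = D.nV + i)
    (hw : 0 < D.coindepSum w i) : ZeroAcyclic D w := by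
  set Z : Finset D.E := {e | w e = 0}
  have hzeroRel : zeroRel D w = D.edgeRel Z := by
    ext u v; simp [zeroRel, edgeRel, Z]
  have hcard : Fintype.card (Quot (zeroRel D w)) = D.numComps Z := by
    simp only [hzeroRel, numComps]
  obtain ⟨F, hF, hprod⟩ := exists_ne_zero_of_sum_ne_zero hw.ne'
  obtain ⟨rfl, hconn⟩ := mem_coindepSets.1 hF
  have hZF : Z ⊆ univ \ F := fun e he ↦ mem_sdiff.2
    ⟨mem_univ e, fun heF ↦ prod_ne_zero_iff.1 hprod e heF (mem_filter.1 he).2⟩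
  have hcomps := connOn_iff_numComps_le_one.1 (not_not.1 hconn)
  have hunion := numComps_le_numComps_union_add_card Z ((univ \ F) \ Z)
  have hV := nV_le_numComps_add_card Z
  have hcompl : #(univ \ F) = D.nE - #F := card_univ_sdiff F
  have hFE : #F ≤ D.nE := card_le_univ F
  rw [sdiff_union_of_subset hZF, card_sdiff_of_subset hZF] at hunion
  have hZcard := card_le_card hZF
  change Fintype.card (Quot (zeroRel D w)) + #Z = D.nV
  omega

end Multigraph

namespace MGIso

variable {G H : Multigraph}

theorem nV_eq (φ : MGIso G H) : G.nV = H.nV := Fintype.card_congr φ.vMap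

theorem nE_eq (φ : MGIso G H) : G.nE = H.nE := Fintype.card_congr φ.eMap

theorem disconnects_map_iff (φ : MGIso G H) {F : Finset G.E} :
    H.Disconnects (F.map φ.eMap.toEmbedding) ↔ G.Disconnects F := by
  have hcolor (A : H.V → Bool) (e : G.E) :
      A (H.src (φ.eMap e)) ≠ A (H.tgt (φ.eMap e)) ↔
        A (φ.vMap (G.src e)) ≠ A (φ.vMap (G.tgt e)) := by
    obtain ⟨hs, ht⟩ | ⟨hs, ht⟩ := φ.ends_eq e <;> rw [hs, ht]
    exact ne_comm
  simp only [Multigraph.disconnects_iff_exists_color]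
  constructor
  · rintro ⟨A, ⟨u, v, huv⟩, hA⟩
    refine ⟨A ∘ φ.vMap, ⟨φ.vMap.symm u, φ.vMap.symm v, by simpa using huv⟩, fun e he ↦ ?_⟩
    simpa using hA (φ.eMap e) ((hcolor A e).2 he)
  · rintro ⟨A, ⟨u, v, huv⟩, hA⟩
    refine ⟨A ∘ φ.vMap.symm, ⟨φ.vMap u, φ.vMap v, by simpa using huv⟩, fun e' he ↦ ?_⟩
    obtain ⟨e, rfl⟩ := φ.eMap.surjective e'
    simpa using hA e (by simpa using (hcolor _ e).1 he)

theorem coindepSum_comp_eMap (φ : MGIso G H) (w : H.E → ℕ) (i : ℕ) :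
    G.coindepSum (w ∘ φ.eMap) i = H.coindepSum w i := by
  refine sum_equiv φ.eMap.finsetCongr (fun F ↦ ?_) fun F _ ↦ ?_
  · simp [Multigraph.mem_coindepSets, φ.disconnects_map_iff]
  · simp

theorem card_coindepSets_eq (φ : MGIso G H) (i : ℕ) :
    #(G.coindepSets i) = #(H.coindepSets i) := by
  rw [← Multigraph.coindepSum_one, ← Multigraph.coindepSum_one]
  exact φ.coindepSum_comp_eMap (fun _ ↦ 1) i

end MGIso

section Sigma

variable {ι : Type*} [Fintype ι] {κ : ι → Type*} [∀ i, Fintype (κ i)]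

theorem card_filter_injOn_sigmaFst_image_eq (X : Finset ι) :
    #{F : Finset (Σ i, κ i) | Set.InjOn Sigma.fst (F : Set (Σ i, κ i)) ∧ F.image Sigma.fst = X} =
      ∏ i ∈ X, Fintype.card (κ i) := by
  simp_rw [← card_univ (α := κ _)]
  rw [← card_pi]
  symm
  refine card_bij (fun s _ ↦ X.attach.image fun i : X ↦ (⟨i, s i i.2⟩ : Σ i, κ i))
    (fun s _ ↦ ?_) (fun s _ t _ hst ↦ ?_) fun F hF ↦ ?_
  · refine mem_filter.2 ⟨mem_univ _, fun x hx y hy hxy ↦ ?_, ?_⟩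
    · obtain ⟨⟨i, hi⟩, _, rfl⟩ := mem_image.1 (mem_coe.1 hx)
      obtain ⟨⟨j, hj⟩, _, rfl⟩ := mem_image.1 (mem_coe.1 hy)
      obtain rfl : i = j := hxy
      rfl
    · rw [image_image]
      exact X.attach_image_val
  · ext i hi
    have hmem : (⟨i, s i hi⟩ : Σ i, κ i) ∈ X.attach.image fun j : X ↦ ⟨j, t j j.2⟩ :=
      hst ▸ mem_image.2 ⟨⟨i, hi⟩, mem_attach _ _, rfl⟩
    obtain ⟨⟨j, hj⟩, _, heq⟩ := mem_image.1 hmem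
    obtain ⟨rfl, hval⟩ := Sigma.mk.inj_iff.1 heq
    exact (eq_of_heq hval).symm
  · obtain ⟨_, hinj, rfl⟩ := mem_filter.1 hF
    have hlift (i : ι) (hi : i ∈ F.image Sigma.fst) : ∃ k, (⟨i, k⟩ : Σ i, κ i) ∈ F := by
      obtain ⟨x, hx, rfl⟩ := mem_image.1 hi
      exact ⟨x.2, hx⟩
    choose s hs using hlift
    refine ⟨s, mem_pi.2 fun _ _ ↦ mem_univ _, ?_⟩
    ext x
    simp only [mem_image (s := attach _), mem_attach, true_and, Subtype.exists]
    constructor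
    · rintro ⟨i, hi, rfl⟩
      exact hs i hi
    · intro hx
      have hx' := mem_image_of_mem Sigma.fst hx
      exact ⟨x.1, hx', hinj (hs _ hx') hx rfl⟩

end Sigma

theorem exists_ne_succ_of_ne {α : Type*} {f : ℕ → α} {i j : ℕ} (hij : i ≤ j)
    (hne : f i ≠ f j) : ∃ k, i ≤ k ∧ k < j ∧ f k ≠ f (k + 1) := by
  by_contra! h
  have hconst (k : ℕ) (hik : i ≤ k) : k ≤ j → f i = f k := by
    induction k, hik using Nat.le_induction with
    | base => exact fun _ ↦ rfl
    | succ k hik ih => exact fun hkj ↦ (ih (by omega)).trans (h k hik hkj)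
  exact hne (hconst j hij le_rfl)

section Subdivision

open Multigraph

variable {D : Multigraph} {w : D.E → ℕ}

theorem chainNode_zero (e : D.E) : chainNode D w e 0 = .inl (Quot.mk _ (D.src e)) := by
  simp [chainNode]

theorem chainNode_length (e : D.E) : chainNode D w e (w e) = .inl (Quot.mk _ (D.tgt e)) := by
  rcases Nat.eq_zero_or_pos (w e) with hw | hw
  · rw [hw, chainNode_zero]
    exact congrArg _ (Quot.sound ⟨e, hw, rfl, rfl⟩)
  · simp [chainNode, hw.ne']

theorem chainNode_succ (e : D.E) (i : Fin (w e - 1)) : chainNode D w e (i + 1) = .inr ⟨e, i⟩ := by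
  have : (i : ℕ) + 1 < w e := by omega
  simp [chainNode, this]

theorem exists_color_subdivide {α : Type*} (g : D.V → α) (B : D.E → ℕ → α)
    (hsrc : ∀ e, B e 0 = g (D.src e)) (htgt : ∀ e, B e (w e) = g (D.tgt e)) :
    ∃ A : (subdivide D w).V → α, (∀ v, A (.inl (Quot.mk _ v)) = g v) ∧
      ∀ e, ∀ j ≤ w e, A (chainNode D w e j) = B e j := by
  have g_congr (u v : D.V) (huv : zeroRel D w u v) : g u = g v := by
    obtain ⟨e, he, rfl, rfl⟩ := huv
    rw [← hsrc, ← htgt, he]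
  refine ⟨Sum.elim (Quot.lift g g_congr) fun x ↦ B x.1 (x.2 + 1), fun v ↦ rfl, fun e j hj ↦ ?_⟩
  rcases hj.eq_or_lt with rfl | hj
  · rw [chainNode_length, htgt]; rfl
  rcases j with _ | j
  · rw [chainNode_zero, hsrc]; rfl
  · exact congrArg _ (chainNode_succ e ⟨j, by omega⟩)

/-- The `k`-th edge of the chain replacing `e`. -/
def chainEdge (w : D.E → ℕ) (e : D.E) (k : Fin (w e)) : (subdivide D w).E := ⟨e, k⟩

/-- The edge of `D` whose chain contains the edge `x` of the subdivision. -/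
def chainOf (x : (subdivide D w).E) : D.E := x.1

theorem mem_image_chainOf {F : Finset (subdivide D w).E} {e : D.E} :
    e ∈ F.image chainOf ↔ ∃ k, chainEdge w e k ∈ F := by
  rw [mem_image]
  exact ⟨fun ⟨x, hx, hxe⟩ ↦ hxe ▸ ⟨x.2, hx⟩, fun ⟨k, hk⟩ ↦ ⟨_, hk, rfl⟩⟩

theorem injOn_chainOf_iff {F : Finset (subdivide D w).E} :
    Set.InjOn chainOf (F : Set (subdivide D w).E) ↔
      ∀ e k l, chainEdge w e k ∈ F → chainEdge w e l ∈ F → k = l := by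
  refine ⟨fun hinj e k l hk hl ↦ ?_, fun h ↦ ?_⟩
  · exact eq_of_heq (Sigma.mk.inj (hinj hk hl rfl)).2
  · rintro ⟨e, k⟩ hk ⟨_, l⟩ hl rfl
    exact congrArg (chainEdge w e) (h e k l hk hl)

theorem disconnects_subdivide_iff_exists_color {F : Finset (subdivide D w).E} :
    (subdivide D w).Disconnects F ↔
      ∃ A : (subdivide D w).V → Bool, (∃ x y, A x ≠ A y) ∧
        ∀ e (k : Fin (w e)), A (chainNode D w e k) ≠ A (chainNode D w e (k + 1)) →
          chainEdge w e k ∈ F := by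
  rw [disconnects_iff_exists_color]
  exact exists_congr fun A ↦ and_congr_right fun _ ↦ Sigma.forall

theorem disconnects_subdivide_of_not_injOn {F : Finset (subdivide D w).E}
    (hF : ¬ Set.InjOn chainOf (F : Set (subdivide D w).E)) : (subdivide D w).Disconnects F := by
  obtain ⟨e, k, l, hk, hl, hkl⟩ :
      ∃ e k l, chainEdge w e k ∈ F ∧ chainEdge w e l ∈ F ∧ k < l := by
    rw [injOn_chainOf_iff] at hF
    push Not at hF
    obtain ⟨e, k, l, hk, hl, hne⟩ := hF
    rcases hne.lt_or_gt with hkl | hlk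
    · exact ⟨e, k, l, hk, hl, hkl⟩
    · exact ⟨e, l, k, hl, hk, hlk⟩
  -- Colour the segment of the chain of `e` between the two deleted edges.
  obtain ⟨A, -, hA⟩ := exists_color_subdivide (w := w) (fun _ ↦ false)
    (fun f j ↦ decide (f = e ∧ k < j ∧ j ≤ l)) (by simp) (by grind)
  refine disconnects_subdivide_iff_exists_color.2
    ⟨A, ⟨chainNode D w e l, chainNode D w e 0, ?_⟩, fun f m hne ↦ ?_⟩
  · rw [hA e l l.2.le, hA e 0 (Nat.zero_le _)]
    simp [hkl]
  · rw [hA f m m.2.le, hA f (m + 1) m.2, ne_eq, decide_eq_decide] at hne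
    obtain rfl : f = e := by tauto
    simp only [true_and] at hne
    obtain hm | hm : (m : ℕ) = k ∨ (m : ℕ) = l := by omega
    · rwa [Fin.ext hm]
    · rwa [Fin.ext hm]

theorem disconnects_subdivide_of_disconnects_image {F : Finset (subdivide D w).E}
    (hF : D.Disconnects (F.image chainOf)) : (subdivide D w).Disconnects F := by
  obtain ⟨g, ⟨u, v, huv⟩, hg⟩ := disconnects_iff_exists_color.1 hF
  -- Along each chain, the colour switches right after the first deleted edge.
  obtain ⟨A, hAg, hA⟩ := exists_color_subdivide (w := w) g
    (fun e j ↦ if ∃ k : Fin (w e), k < j ∧ chainEdge w e k ∈ F then g (D.tgt e) else g (D.src e))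
    (by simp) fun e ↦ by
      split_ifs with hk
      · rfl
      · by_contra hne
        obtain ⟨k, hkF⟩ := mem_image_chainOf.1 (hg e hne)
        exact hk ⟨k, k.2, hkF⟩
  refine disconnects_subdivide_iff_exists_color.2
    ⟨A, ⟨_, _, (hAg u).trans_ne (huv.trans_eq (hAg v).symm)⟩, fun e m hne ↦ ?_⟩
  by_contra hmF
  have hsame : (∃ k : Fin (w e), k < (m : ℕ) + 1 ∧ chainEdge w e k ∈ F) ↔
      ∃ k : Fin (w e), (k : ℕ) < m ∧ chainEdge w e k ∈ F :=
    exists_congr fun k ↦ and_congr_left fun hkF ↦ by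
      have : (k : ℕ) ≠ m := fun hkm ↦ hmF (Fin.ext hkm ▸ hkF)
      omega
  rw [hA e m m.2.le, hA e (m + 1) m.2] at hne
  exact hne (by simp only [hsame])

theorem exists_chainEdge_mem_of_color_ne {F : Finset (subdivide D w).E} {α : Type*}
    {A : (subdivide D w).V → α} {e : D.E}
    (hA : ∀ k : Fin (w e), A (chainNode D w e k) ≠ A (chainNode D w e (k + 1)) →
      chainEdge w e k ∈ F) {i j : ℕ} (hij : i ≤ j) (hj : j ≤ w e)
    (hne : A (chainNode D w e i) ≠ A (chainNode D w e j)) :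
    ∃ k : Fin (w e), i ≤ k ∧ k < j ∧ chainEdge w e k ∈ F := by
  obtain ⟨k, hik, hkj, hk⟩ :=
    exists_ne_succ_of_ne (f := fun m ↦ A (chainNode D w e m)) hij hne
  exact ⟨⟨k, by omega⟩, hik, hkj, hA ⟨k, by omega⟩ hk⟩

theorem disconnects_image_of_disconnects_subdivide {F : Finset (subdivide D w).E}
    (hinj : Set.InjOn chainOf (F : Set (subdivide D w).E)) (hF : (subdivide D w).Disconnects F) :
    D.Disconnects (F.image chainOf) := by
  obtain ⟨A, ⟨x, y, hxy⟩, hA⟩ := disconnects_subdivide_iff_exists_color.1 hF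
  refine disconnects_iff_exists_color.2
    ⟨fun v ↦ A (.inl (Quot.mk _ v)), ?_, fun e he ↦ ?_⟩
  · -- If all original vertices had one colour, an internal vertex of another colour would force
    -- a deleted edge on either side of it in its chain.
    by_contra! hconst
    have hinner (e : D.E) (i : Fin (w e - 1)) : A (.inr ⟨e, i⟩) = A (chainNode D w e 0) := by
      by_contra hne
      rw [← chainNode_succ] at hne
      obtain ⟨k, -, hki, hk⟩ :=
        exists_chainEdge_mem_of_color_ne (hA e) (Nat.zero_le _) (by omega) (Ne.symm hne)
      obtain ⟨l, hil, -, hl⟩ := exists_chainEdge_mem_of_color_ne (hA e) (by omega) le_rfl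
        (ne_of_ne_of_eq hne (by rw [chainNode_zero, chainNode_length, hconst]))
      have hkl := injOn_chainOf_iff.1 hinj e k l hk hl
      omega
    have hbase (z : (subdivide D w).V) : ∃ v, A z = A (.inl (Quot.mk _ v)) := by
      rcases z with q | ⟨e, i⟩
      · obtain ⟨v, rfl⟩ := Quot.exists_rep q
        exact ⟨v, rfl⟩
      · exact ⟨D.src e, (hinner e i).trans (by rw [chainNode_zero])⟩
    obtain ⟨u, hu⟩ := hbase x
    obtain ⟨v, hv⟩ := hbase y
    exact hxy (by rw [hu, hv, hconst u v])
  · obtain ⟨k, -, -, hk⟩ := exists_chainEdge_mem_of_color_ne (hA e) (Nat.zero_le (w e)) le_rfl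
      (by rwa [chainNode_zero, chainNode_length])
    exact mem_image_chainOf.2 ⟨k, hk⟩

theorem not_disconnects_subdivide_iff {F : Finset (subdivide D w).E} :
    ¬ (subdivide D w).Disconnects F ↔
      Set.InjOn chainOf (F : Set (subdivide D w).E) ∧ ¬ D.Disconnects (F.image chainOf) := by
  refine ⟨fun hF ↦ ⟨not_imp_comm.1 disconnects_subdivide_of_not_injOn hF, fun himg ↦ ?_⟩,
    fun ⟨hinj, himg⟩ hF ↦ himg (disconnects_image_of_disconnects_subdivide hinj hF)⟩
  exact hF (disconnects_subdivide_of_disconnects_image himg)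

theorem card_coindepSets_subdivide (D : Multigraph) (w : D.E → ℕ) (i : ℕ) :
    #((subdivide D w).coindepSets i) = D.coindepSum w i := by
  have mem_iff (F : Finset (subdivide D w).E) : F ∈ (subdivide D w).coindepSets i ↔
      Set.InjOn chainOf (F : Set (subdivide D w).E) ∧ F.image chainOf ∈ D.coindepSets i := by
    rw [mem_coindepSets, mem_coindepSets, not_disconnects_subdivide_iff, and_left_comm]
    exact and_congr_right fun hinj ↦ by rw [card_image_of_injOn hinj]
  rw [card_eq_sum_card_fiberwise (f := image chainOf) fun F hF ↦ ((mem_iff F).1 hF).2]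
  refine sum_congr rfl fun X hX ↦ ?_
  have hfiber : {F ∈ (subdivide D w).coindepSets i | F.image chainOf = X} =
      univ.filter fun F : Finset (subdivide D w).E ↦
        Set.InjOn chainOf (F : Set (subdivide D w).E) ∧ F.image chainOf = X := by
    ext F
    simp only [mem_filter, mem_iff, mem_univ, true_and]
    grind
  rw [hfiber]
  exact (card_filter_injOn_sigmaFst_image_eq (κ := fun e ↦ Fin (w e)) X).trans (by simp)

theorem nE_subdivide (D : Multigraph) (w : D.E → ℕ) : (subdivide D w).nE = ∑ e, w e := by
  rw [nE]
  exact (Fintype.card_sigma ..).trans (by simp)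

theorem nV_subdivide_add_nE (hw : ZeroAcyclic D w) :
    (subdivide D w).nV + D.nE = D.nV + ∑ e, w e := by
  have hsplit : ∑ e, (w e - 1) + D.nE = ∑ e, w e + #{e | w e = 0} := by
    rw [nE, ← card_univ, card_eq_sum_ones, card_filter, ← sum_add_distrib, ← sum_add_distrib]
    refine sum_congr rfl fun e _ ↦ ?_
    split_ifs <;> omega
  have hV : (subdivide D w).nV = Fintype.card (Quot (zeroRel D w)) + ∑ e, (w e - 1) :=
    (Fintype.card_sum ..).trans (by simp)
  unfold ZeroAcyclic at hw
  rw [hV, nV]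
  omega

theorem connected_subdivide (hD : D.Connected) : (subdivide D w).Connected := by
  have hDdis : ¬ D.Disconnects ∅ := by simpa [Disconnects, Connected] using hD
  have hsub : ¬ (subdivide D w).Disconnects ∅ :=
    not_disconnects_subdivide_iff.2 ⟨by simp, by rwa [image_empty]⟩
  simpa [Disconnects, Connected] using hsub

end Subdivision

theorem isWeakSubdivision_subdivide {D : Multigraph} {w : D.E → ℕ} (hw : ZeroAcyclic D w) :
    IsWeakSubdivision (subdivide D w) D w :=
  ⟨hw, ⟨⟨Equiv.refl _, Equiv.refl _, fun _ ↦ .inl ⟨rfl, rfl⟩⟩⟩⟩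

namespace IsWeakSubdivision

variable {G D : Multigraph} {w : D.E → ℕ}

theorem card_coindepSets_eq (h : IsWeakSubdivision G D w) (i : ℕ) :
    #(G.coindepSets i) = D.coindepSum w i := by
  obtain ⟨-, ⟨φ⟩⟩ := h
  rw [φ.card_coindepSets_eq, card_coindepSets_subdivide]

theorem nE_eq (h : IsWeakSubdivision G D w) : G.nE = ∑ e, w e := by
  obtain ⟨-, ⟨φ⟩⟩ := h
  rw [φ.nE_eq, nE_subdivide]

theorem nV_add_nE (h : IsWeakSubdivision G D w) : G.nV + D.nE = D.nV + ∑ e, w e := by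
  obtain ⟨hw, ⟨φ⟩⟩ := h
  rw [φ.nV_eq, nV_subdivide_add_nE hw]

end IsWeakSubdivision

section Esymm

variable {R : Type*} [CommSemiring R]

theorem esymm_zero_right (s : Multiset R) : s.esymm 0 = 1 := by
  simp [Multiset.esymm]

theorem esymm_one (s : Multiset R) : s.esymm 1 = s.sum := by
  simp [Multiset.esymm, Multiset.powersetCard_one]

theorem zero_esymm_succ (i : ℕ) : (0 : Multiset R).esymm (i + 1) = 0 := by
  simp [Multiset.esymm, Multiset.powersetCard_zero_right]

theorem cons_esymm_succ (a : R) (s : Multiset R) (i : ℕ) :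
    (a ::ₘ s).esymm (i + 1) = a * s.esymm i + s.esymm (i + 1) := by
  simp [Multiset.esymm, Multiset.powersetCard_cons, Multiset.sum_map_mul_left, add_comm]

end Esymm

namespace K4

open Multigraph

instance : DecidableEq K4.V := inferInstanceAs (DecidableEq (Fin 4))

instance : DecidableEq K4.E := inferInstanceAs (DecidableEq {p : Fin 4 × Fin 4 // p.1 < p.2})

/-- The edges of `K₄` at the vertex `v`. -/
def star (v : K4.V) : Finset K4.E := {e | K4.src e = v ∨ K4.tgt e = v}

/-- The edges of `K₄` whose endpoints are coloured differently by `A`. -/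
def cut (A : K4.V → Bool) : Finset K4.E := {e | A (K4.src e) ≠ A (K4.tgt e)}

theorem three_le_card_cut : ∀ A : K4.V → Bool, (∃ u v, A u ≠ A v) → 3 ≤ #(cut A) := by
  decide

theorem exists_star_eq_cut : ∀ A : K4.V → Bool, #(cut A) = 3 → ∃ v, star v = cut A := by
  decide

theorem card_star : ∀ v, #(star v) = 3 := by
  decide

theorem star_injective : Function.Injective star := by
  decide

theorem disconnects_iff_exists_cut_subset {F : Finset K4.E} :
    K4.Disconnects F ↔ ∃ A : K4.V → Bool, (∃ u v, A u ≠ A v) ∧ cut A ⊆ F := by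
  simp [disconnects_iff_exists_color, cut, subset_iff]

theorem disconnections_eq_empty {i : ℕ} (hi : i < 3) : K4.disconnections i = ∅ := by
  refine filter_eq_empty_iff.2 fun F _ ⟨hcard, hF⟩ ↦ hi.not_ge ?_
  obtain ⟨A, hA, hAF⟩ := disconnects_iff_exists_cut_subset.1 hF
  exact hcard ▸ (three_le_card_cut A hA).trans (card_le_card hAF)

theorem disconnections_three : K4.disconnections 3 = univ.image star := by
  ext F
  simp only [disconnections, mem_filter, mem_univ, true_and, mem_image]
  constructor
  · rintro ⟨hcard, hF⟩
    obtain ⟨A, hA, hAF⟩ := disconnects_iff_exists_cut_subset.1 hF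
    obtain rfl := eq_of_subset_of_card_le hAF (hcard ▸ three_le_card_cut A hA)
    exact exists_star_eq_cut A hcard
  · rintro ⟨v, rfl⟩
    refine ⟨card_star v, disconnects_iff_exists_cut_subset.2 ⟨fun u ↦ decide (u = v), ?_⟩⟩
    revert v
    decide

theorem connected : K4.Connected := by
  have hempty : ¬ K4.Disconnects ∅ := fun h ↦
    filter_eq_empty_iff.1 (disconnections_eq_empty (by decide)) (mem_univ ∅) ⟨rfl, h⟩
  simpa only [Disconnects, Connected, sdiff_empty, not_not] using hempty

theorem coindepSum_eq_esymm (w : K4.E → ℕ) {i : ℕ} (hi : i < 3) :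
    K4.coindepSum w i = (univ.val.map w).esymm i := by
  rw [← coindepSum_add_sum_disconnections, disconnections_eq_empty hi, sum_empty, add_zero]

theorem coindepSum_three_add_sum_star (w : K4.E → ℕ) :
    K4.coindepSum w 3 + ∑ v, ∏ e ∈ star v, w e = (univ.val.map w).esymm 3 := by
  rw [← coindepSum_add_sum_disconnections, disconnections_three, sum_image star_injective.injOn]

/-- The edge of `K₄` joining `i` and `j`. -/
def edge (i j : Fin 4) (h : i < j := by decide) : K4.E := ⟨(i, j), h⟩

/-- The chain lengths `a, b, c, d, e, f` on the edges `01, 02, 03, 12, 13, 23` of `K₄`. -/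
def weights (a b c d e f : ℕ) (x : K4.E) : ℕ :=
  !![0, a, b, c; 0, 0, d, e; 0, 0, 0, f; 0, 0, 0, 0] x.1.1 x.1.2

theorem eq_weights (w : K4.E → ℕ) :
    w = weights (w (edge 0 1)) (w (edge 0 2)) (w (edge 0 3)) (w (edge 1 2)) (w (edge 1 3))
      (w (edge 2 3)) := by
  funext ⟨⟨i, j⟩, hij⟩
  fin_cases i <;> fin_cases j <;> first | rfl | exact absurd hij (by decide)

variable (a b c d e f : ℕ)

theorem map_weights_univ :
    univ.val.map (weights a b c d e f) = a ::ₘ b ::ₘ c ::ₘ d ::ₘ e ::ₘ f ::ₘ 0 :=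
  rfl

theorem sum_weights : ∑ x, weights a b c d e f x = a + b + c + d + e + f := by
  rw [sum_eq_multiset_sum, map_weights_univ]
  simp only [Multiset.sum_cons, Multiset.sum_zero]
  ring

theorem coindepSum_weights_two :
    K4.coindepSum (weights a b c d e f) 2 =
      a * (b + c + d + e + f) + b * (c + d + e + f) + c * (d + e + f) + d * (e + f) + e * f := by
  rw [coindepSum_eq_esymm _ (by decide), map_weights_univ]
  simp only [cons_esymm_succ, esymm_zero_right, zero_esymm_succ]
  ring

theorem coindepSum_weights_three :
    K4.coindepSum (weights a b c d e f) 3 =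
      a * b * (d + e + f) + (a + b) * c * (d + e + f) + a * f * (d + e) + b * e * (d + f) +
        c * d * (e + f) + d * e * f := by
  have hstar : ∑ v, ∏ x ∈ star v, weights a b c d e f x =
      a * b * c + a * d * e + b * d * f + c * e * f := by
    change a * (b * (c * 1)) + (a * (d * (e * 1)) +
      (b * (d * (f * 1)) + (c * (e * (f * 1)) + 0))) = _
    ring
  have hesymm := coindepSum_three_add_sum_star (weights a b c d e f)
  rw [hstar, map_weights_univ] at hesymm
  simp only [cons_esymm_succ, esymm_zero_right, zero_esymm_succ] at hesymm
  linarith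

/-- The chain lengths `w'` beat the chain lengths `w` of the same total: the subdivision by `w'`
has more 2-element and more 3-element coindependent sets, that is, smaller `d 2` and `d 3`. -/
structure Improves (w' w : K4.E → ℕ) : Prop where
  sum_eq : ∑ x, w' x = ∑ x, w x
  two_lt : K4.coindepSum w 2 < K4.coindepSum w' 2
  three_lt : K4.coindepSum w 3 < K4.coindepSum w' 3

theorem Improves.coindepSum_le {w' w : K4.E → ℕ} (h : Improves w' w) :
    ∀ i, K4.coindepSum w i ≤ K4.coindepSum w' i
  | 0 => by simp only [coindepSum_eq_esymm _ zero_lt_three, esymm_zero_right, le_refl]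
  | 1 => by
    have hsum : (univ.val.map w').sum = (univ.val.map w).sum := h.sum_eq
    simp only [coindepSum_eq_esymm _ (show 1 < 3 by decide), esymm_one, hsum, le_refl]
  | 2 => h.two_lt.le
  | 3 => h.three_lt.le
  | i + 4 => by
    have hi : K4.nE + 1 < K4.nV + (i + 4) := by
      change 6 + 1 < 4 + (i + 4)
      omega
    simp only [coindepSum_eq_zero _ hi, le_refl]

theorem Improves.comp_symm {φ : MGIso K4 K4} {v w : K4.E → ℕ}
    (h : Improves v (w ∘ φ.eMap)) : Improves (v ∘ φ.eMap.symm) w := by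
  have hv (i : ℕ) : K4.coindepSum (v ∘ φ.eMap.symm) i = K4.coindepSum v i := by
    rw [← φ.coindepSum_comp_eMap, Function.comp_assoc, Equiv.symm_comp_self, Function.comp_id]
  refine ⟨?_, ?_, ?_⟩
  · exact (φ.eMap.symm.sum_comp v).trans (h.sum_eq.trans (φ.eMap.sum_comp w))
  · rw [hv, ← φ.coindepSum_comp_eMap w]
    exact h.two_lt
  · rw [hv, ← φ.coindepSum_comp_eMap w]
    exact h.three_lt

variable {a b c d e f : ℕ}

theorem improves_weights_of_adjacent {t : ℕ}
    (h : d * f < (t + 1) * (d + e + f) + d * e) :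
    Improves (weights (b + 1 + t) (b + 1) c d e f) (weights (b + 2 + t) b c d e f) := by
  refine ⟨?_, ?_, ?_⟩
  · simp only [sum_weights]
    ring
  · simp only [coindepSum_weights_two]
    linarith
  · simp only [coindepSum_weights_three]
    linarith

theorem exceptional_of_mul_le {t : ℕ} (hd : d ≤ b + 2 + t) (he : b ≤ e)
    (hf : f ≤ b + 2 + t) (hpos : 0 < d + e + f)
    (h : (t + 1) * (d + e + f) + d * e ≤ d * f) :
    t = 0 ∧ b = 0 ∧ d = 2 ∧ e = 0 ∧ f = 2 := by
  have hf₀ : 0 < f := by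
    by_contra! hf₀
    obtain rfl : f = 0 := by omega
    nlinarith
  have hlt : e + t + 1 < f := by
    by_contra! hfe
    nlinarith [Nat.mul_le_mul_left d hfe]
  obtain rfl : f = e + t + 2 := by omega
  obtain rfl : b = e := by omega
  have : (t + 1) * (2 * b + t + 2) ≤ d := by nlinarith
  have ht : t = 0 := by
    by_contra! ht
    nlinarith [Nat.pos_of_ne_zero ht]
  subst ht
  omega

theorem exists_improves_exceptional (hc : c ≤ 2) : ∃ v, Improves v (weights 2 0 c 2 0 2) := by
  -- Lengthen the other empty chain instead; for `c = 2` this leaves the count of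
  -- three-element sets unchanged, but two transfers succeed.
  obtain hc | rfl : c ≤ 1 ∨ c = 2 := by omega
  · refine ⟨weights 1 0 c 2 1 2, ?_, ?_, ?_⟩ <;>
      simp only [sum_weights, coindepSum_weights_two, coindepSum_weights_three] <;> omega
  · refine ⟨weights 1 1 2 2 1 1, ?_, ?_, ?_⟩ <;>
      simp only [sum_weights, coindepSum_weights_two, coindepSum_weights_three] <;> decide

theorem exists_improves_weights_of_adjacent (hab : b + 2 ≤ a) (hc : c ≤ a) (hd : d ≤ a)
    (he : b ≤ e) (hf : f ≤ a) (hpos : 0 < d + e + f) : ∃ v, Improves v (weights a b c d e f) := by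
  obtain ⟨t, rfl⟩ := Nat.exists_eq_add_of_le hab
  rcases lt_or_ge (d * f) ((t + 1) * (d + e + f) + d * e) with h | h
  · exact ⟨_, improves_weights_of_adjacent h⟩
  · obtain ⟨rfl, rfl, rfl, rfl, rfl⟩ := exceptional_of_mul_le hd he hf hpos h
    exact exists_improves_exceptional hc

theorem exists_improves_weights_of_opposite (hb : f < b) (hc : f < c) (hd : f < d) (he : f < e)
    (hba : b ≤ a) (hca : c ≤ a) (hda : d ≤ a) (hea : e ≤ a) (hfa : f + 2 ≤ a) :
    ∃ v, Improves v (weights a b c d e f) := by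
  obtain ⟨t, rfl⟩ := Nat.exists_eq_add_of_le hfa
  refine ⟨weights (f + 1 + t) b c d e (f + 1), ?_, ?_, ?_⟩
  · simp only [sum_weights]
    ring
  · simp only [coindepSum_weights_two]
    linarith
  · have hcross : b * d + c * e < (t + 1) * (b + c + d + e) + (b * c + d * e) := by
      rcases le_total e b with hs | hs <;> obtain ⟨s, rfl⟩ := Nat.exists_eq_add_of_le hs
      · have hst : s ≤ t + 1 := by omega
        nlinarith [Nat.mul_le_mul_right d hst]
      · have hst : s ≤ t + 1 := by omega
        nlinarith [Nat.mul_le_mul_right c hst]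
    simp only [coindepSum_weights_three]
    linarith

/-- The action of a permutation of the vertices of `K₄` on its edges. -/
def mapEdge (σ : Equiv.Perm (Fin 4)) (x : K4.E) : K4.E :=
  ⟨(min (σ x.1.1) (σ x.1.2), max (σ x.1.1) (σ x.1.2)),
    min_lt_max.2 (σ.injective.ne x.2.ne)⟩

theorem mapEdge_symm_mapEdge (σ : Equiv.Perm (Fin 4)) (x : K4.E) :
    mapEdge σ.symm (mapEdge σ x) = x := by
  obtain ⟨⟨i, j⟩, hij : i < j⟩ := x
  rcases le_total (σ i) (σ j) with h | h <;> apply Subtype.ext <;>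
    simp only [mapEdge, min_eq_left, max_eq_right, min_eq_right, max_eq_left,
      Equiv.symm_apply_apply, h, hij.le]

/-- The automorphism of `K₄` induced by a permutation of its vertices. -/
def automorphism (σ : Equiv.Perm (Fin 4)) : MGIso K4 K4 where
  vMap := σ
  eMap :=
    { toFun := mapEdge σ
      invFun := mapEdge σ.symm
      left_inv := mapEdge_symm_mapEdge σ
      right_inv := mapEdge_symm_mapEdge σ.symm }
  ends_eq x := by
    rcases le_total (σ x.1.1) (σ x.1.2) with h | h
    · exact .inl ⟨min_eq_left h, max_eq_right h⟩
    · exact .inr ⟨min_eq_right h, max_eq_left h⟩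

instance : DecidableRel (AdjEdges K4) := fun x y ↦
  inferInstanceAs (Decidable (∃ v : Fin 4, (x.1.1 = v ∨ x.1.2 = v) ∧ (y.1.1 = v ∨ y.1.2 = v)))

theorem exists_mapEdge_eq_of_adjEdges : ∀ x y : K4.E, x ≠ y → AdjEdges K4 x y →
    ∃ σ, mapEdge σ (edge 0 1) = x ∧ mapEdge σ (edge 0 2) = y := by
  decide +kernel

theorem exists_mapEdge_eq_of_not_adjEdges : ∀ x y : K4.E, ¬ AdjEdges K4 x y →
    ∃ σ, mapEdge σ (edge 0 1) = x ∧ mapEdge σ (edge 2 3) = y := by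
  decide +kernel

theorem eq_of_not_adjEdges : ∀ x y z : K4.E, ¬ AdjEdges K4 x y → ¬ AdjEdges K4 x z → y = z := by
  decide +kernel

variable {w : K4.E → ℕ} {x y : K4.E}

theorem exists_improves_of_adjEdges (hxy : x ≠ y) (hadj : AdjEdges K4 x y)
    (hmax : ∀ z, w z ≤ w x) (hmin : ∀ z, w y ≤ w z) (hlt : w y + 2 ≤ w x)
    (hpos : 0 < K4.coindepSum w 3) : ∃ w', Improves w' w := by
  obtain ⟨σ, rfl, rfl⟩ := exists_mapEdge_eq_of_adjEdges x y hxy hadj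
  set u := w ∘ (automorphism σ).eMap
  have hupos : 0 < K4.coindepSum u 3 := by rwa [MGIso.coindepSum_comp_eMap]
  have hdef : 0 < u (edge 1 2) + u (edge 1 3) + u (edge 2 3) := by
    by_contra! h0
    simp only [nonpos_iff_eq_zero, add_eq_zero] at h0
    rw [eq_weights u, coindepSum_weights_three, h0.1.1, h0.1.2, h0.2] at hupos
    simp at hupos
  obtain ⟨v, hv⟩ : ∃ v, Improves v u := by
    rw [eq_weights u]
    exact exists_improves_weights_of_adjacent hlt (hmax _) (hmax _) (hmin _) (hmax _) hdef
  exact ⟨_, hv.comp_symm⟩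

theorem exists_improves_of_not_adjEdges (hadj : ¬ AdjEdges K4 x y)
    (hmax : ∀ z, w z ≤ w x) (hmin : ∀ z, z ≠ x → z ≠ y → w y < w z) (hlt : w y + 2 ≤ w x) :
    ∃ w', Improves w' w := by
  obtain ⟨σ, rfl, rfl⟩ := exists_mapEdge_eq_of_not_adjEdges x y hadj
  set u := w ∘ (automorphism σ).eMap
  have hmin' (z : K4.E) (hx : z ≠ edge 0 1) (hy : z ≠ edge 2 3) : u (edge 2 3) < u z :=
    hmin _ ((automorphism σ).eMap.injective.ne hx) ((automorphism σ).eMap.injective.ne hy)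
  obtain ⟨v, hv⟩ : ∃ v, Improves v u := by
    rw [eq_weights u]
    exact exists_improves_weights_of_opposite
      (hmin' _ (by decide) (by decide)) (hmin' _ (by decide) (by decide))
      (hmin' _ (by decide) (by decide)) (hmin' _ (by decide) (by decide))
      (hmax _) (hmax _) (hmax _) (hmax _) hlt
  exact ⟨_, hv.comp_symm⟩

theorem exists_improves (himb : ¬ BalancedWeights w) (hpos : 0 < K4.coindepSum w 3) :
    ∃ w', Improves w' w := by
  have : Nonempty K4.E := ⟨edge 0 1⟩
  obtain ⟨x, hx⟩ := Finite.exists_max w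
  obtain ⟨y, hy⟩ := Finite.exists_min w
  have hlt {z : K4.E} (hz : ∀ z', w z ≤ w z') : w z + 2 ≤ w x := by
    by_contra! h
    exact himb fun e f ↦ by linarith [hx e, hz f]
  by_cases hadj : ∃ z, AdjEdges K4 x z ∧ ∀ z', w z ≤ w z'
  · obtain ⟨z, hxz, hz⟩ := hadj
    have hne : x ≠ z := by
      rintro rfl
      have := hlt hz
      omega
    exact exists_improves_of_adjEdges hne hxz hx hz (hlt hz) hpos
  · push Not at hadj
    have hnot {z : K4.E} (hz : ∀ z', w z ≤ w z') : ¬ AdjEdges K4 x z := fun h ↦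
      (hadj z h).elim fun z' hz' ↦ hz'.not_ge (hz z')
    refine exists_improves_of_not_adjEdges (hnot hy) hx (fun z _ hzy ↦ ?_) (hlt hy)
    by_contra! hz
    exact hzy (eq_of_not_adjEdges x z y (hnot fun z' ↦ hz.trans (hy z')) (hnot hy))

end K4

/-- an imbalanced weak K₄-subdivision G ∈ 𝒢_{n,n+2} is beaten on d₂ and
d₃ by another weak K₄-subdivision H ∈ 𝒢_{n,n+2}; hence it is not p-optimal for any p. -/
theorem imbalanced_K4_subdivision_not_optimal (n : ℕ) (hn : 1 ≤ n)
    (G : Multigraph) (hG : memG G n (n + 2))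
    (w : K4.E → ℕ) (hsub : IsWeakSubdivision G K4 w) (himb : ¬ BalancedWeights w) :
    (∃ H : Multigraph, memG H n (n + 2) ∧
      (∃ w' : K4.E → ℕ, IsWeakSubdivision H K4 w') ∧
      H.d 2 < G.d 2 ∧ H.d 3 < G.d 3) ∧
    (∀ p : ℝ, 0 < p → p < 1 → ¬ pOptimal G n (n + 2) p) := by
  have hGcard := hsub.card_coindepSets_eq
  have hpos : 0 < K4.coindepSum w 3 := by
    rw [← hGcard]
    exact card_pos.2 (Multigraph.coindepSets_nonempty hG.2.2 (hG.1 ▸ hn) (by rw [hG.1, hG.2.1]))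
  obtain ⟨w', hw'⟩ := K4.exists_improves himb hpos
  have hacyc : ZeroAcyclic K4 w' :=
    Multigraph.zeroAcyclic_of_coindepSum_pos rfl (hpos.trans hw'.three_lt)
  have hH : IsWeakSubdivision (subdivide K4 w') K4 w' := isWeakSubdivision_subdivide hacyc
  have hHcard := hH.card_coindepSets_eq
  have hE : G.nE = (subdivide K4 w').nE := by rw [hsub.nE_eq, hH.nE_eq, hw'.sum_eq]
  have hV : G.nV = (subdivide K4 w').nV := by
    rw [← Nat.add_right_cancel_iff, hsub.nV_add_nE, hH.nV_add_nE, hw'.sum_eq]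
  have hmem : memG (subdivide K4 w') n (n + 2) :=
    ⟨hV ▸ hG.1, hE ▸ hG.2.1, connected_subdivide K4.connected⟩
  have hle (i : ℕ) : #(G.coindepSets i) ≤ #((subdivide K4 w').coindepSets i) := by
    simpa only [hGcard, hHcard] using hw'.coindepSum_le i
  have hlt₂ : #(G.coindepSets 2) < #((subdivide K4 w').coindepSets 2) := by
    simpa only [hGcard, hHcard] using hw'.two_lt
  have hlt₃ : #(G.coindepSets 3) < #((subdivide K4 w').coindepSets 3) := by
    simpa only [hGcard, hHcard] using hw'.three_lt
  exact ⟨⟨_, hmem, ⟨w', hH⟩, Multigraph.d_lt_d hE hlt₂, Multigraph.d_lt_d hE hlt₃⟩,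
    fun p hp₀ hp₁ hopt ↦ (hopt.2 _ hmem).not_gt (Multigraph.rel_lt_rel hp₀ hp₁ hE hle hlt₂)⟩
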